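/- Phragmén's unordered method satisfies PJR: for every profile, every number M of seats, and every possible outcome E of Phragmén's unordered method, E provides PJR. Moreover, Phragmén's unordered method does not satisfy EJR: there exist a profile, a number M of seats, and a possible outcome E of Phragmén's unordered method that does not provide EJR. -/

import Mathlib

open Finset

/-- The number of ballots containing candidate `i` (as a rational number). -/
def phVotes {C : Type} [Fintype C] [DecidableEq C] (v : Finset C → ℕ) (i : C) : ℚ :=
  ∑ σ ∈ Finset.univ.filter (fun σ : Finset C => i ∈ σ), (v σ : ℚ)

/-- Phragmén's `t_i = (1 + Σ_{σ∋i} v_σ r_σ)/(Σ_{σ∋i} v_σ)` for the current loads `r`. -/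
def phT {C : Type} [Fintype C] [DecidableEq C]
    (v : Finset C → ℕ) (r : Finset C → ℚ) (i : C) : ℚ :=
  (1 + ∑ σ ∈ Finset.univ.filter (fun σ : Finset C => i ∈ σ), (v σ : ℚ) * r σ) / phVotes v i

/-- The ballot loads after electing the candidates in the list `l`
(most recently elected first); initially all loads are `0`, and when `i` is
elected the load of every ballot containing `i` is set to `t_i`. -/
def phLoads {C : Type} [Fintype C] [DecidableEq C] (v : Finset C → ℕ) :
    List C → Finset C → ℚ
  | [], _ => 0
  | i :: l, σ => if i ∈ σ then phT v (phLoads v l) i else phLoads v l σ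

/-- `l` (most recently elected first) is a valid sequence of elections for
Phragmén's unordered method: each newly elected candidate is a not yet elected
candidate with positive vote count minimizing `t_i`. -/
def phValid {C : Type} [Fintype C] [DecidableEq C] (v : Finset C → ℕ) : List C → Prop
  | [] => True
  | i :: l => phValid v l ∧ i ∉ l ∧ 0 < phVotes v i ∧
      ∀ j : C, j ∉ l → 0 < phVotes v j →
        phT v (phLoads v l) i ≤ phT v (phLoads v l) j

/-- `S` is a possible outcome of Phragmén's unordered method for `M` seats:
its elements can be elected in some order by the rule, ties broken arbitrarily. -/
def PhragmenOutcome {C : Type} [Fintype C] [DecidableEq C]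
    (v : Finset C → ℕ) (M : ℕ) (S : Finset C) : Prop :=
  ∃ l : List C, phValid v l ∧ l.length = M ∧ l.toFinset = S

/-- The outcome `E` (for `M` seats) provides PJR (proportional justified
representation): for every `1 ≤ ℓ ≤ M` and every sub-multiset `g ≤ v` of the
ballots with `|A| ≥ (ℓ/M)·V` whose ballots have at least `ℓ` candidates in common,
at least `ℓ` candidates appearing on some ballot of the group are elected. -/
def ProvidesPJR {C : Type} [Fintype C] [DecidableEq C]
    (v : Finset C → ℕ) (M : ℕ) (E : Finset C) : Prop :=
  ∀ (ℓ : ℕ) (g : Finset C → ℕ), 1 ≤ ℓ → ℓ ≤ M → (∀ σ, g σ ≤ v σ) →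
    (ℓ : ℚ) * (∑ σ : Finset C, (v σ : ℚ)) ≤ (M : ℚ) * (∑ σ : Finset C, (g σ : ℚ)) →
    (∃ T : Finset C, ℓ ≤ T.card ∧ ∀ σ : Finset C, 0 < g σ → T ⊆ σ) →
    ℓ ≤ (E ∩ (Finset.univ.filter fun σ : Finset C => 0 < g σ).biUnion id).card

/-- The outcome `E` (for `M` seats) provides EJR (extended justified
representation): for every `1 ≤ ℓ ≤ M` and every sub-multiset `g ≤ v` of the
ballots with `|A| ≥ (ℓ/M)·V` whose ballots have at least `ℓ` candidates in common,
some ballot of the group contains at least `ℓ` elected candidates. -/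
def ProvidesEJR {C : Type} [Fintype C] [DecidableEq C]
    (v : Finset C → ℕ) (M : ℕ) (E : Finset C) : Prop :=
  ∀ (ℓ : ℕ) (g : Finset C → ℕ), 1 ≤ ℓ → ℓ ≤ M → (∀ σ, g σ ≤ v σ) →
    (ℓ : ℚ) * (∑ σ : Finset C, (v σ : ℚ)) ≤ (M : ℚ) * (∑ σ : Finset C, (g σ : ℚ)) →
    (∃ T : Finset C, ℓ ≤ T.card ∧ ∀ σ : Finset C, 0 < g σ → T ⊆ σ) →
    ∃ σ : Finset C, 0 < g σ ∧ ℓ ≤ (σ ∩ E).card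

section PJR
variable {C : Type} [Fintype C] [DecidableEq C] {v : Finset C → ℕ}

/-- Electing `i` distributes exactly one unit of load. -/
lemma ph_unit (r : Finset C → ℚ) (i : C) (hi : 0 < phVotes v i) :
    ∑ σ : Finset C, (if i ∈ σ then (v σ : ℚ) * (phT v r i - r σ) else 0) = 1 := by
  rw [← Finset.sum_filter]
  simp only [mul_sub, Finset.sum_sub_distrib, ← Finset.sum_mul]
  have h : phVotes v i * phT v r i
      = 1 + ∑ σ ∈ Finset.univ.filter (fun σ : Finset C => i ∈ σ), (v σ : ℚ) * r σ := by
    rw [phT]; field_simp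
  rw [phVotes] at h
  linarith

lemma phT_mono {r r' : Finset C → ℚ} (h : ∀ σ, r σ ≤ r' σ) (i : C) (hi : 0 < phVotes v i) :
    phT v r i ≤ phT v r' i := by
  unfold phT
  gcongr
  exact h _

lemma ph_inv (l : List C) (hl : phValid v l) :
    ∀ σ, ∀ j, j ∉ l → 0 < phVotes v j → phLoads v l σ ≤ phT v (phLoads v l) j := by
  induction l with
  | nil =>
    intro σ j _ hj
    simp only [phLoads, phT, mul_zero, Finset.sum_const_zero, add_zero]
    positivity
  | cons i l ih =>
    obtain ⟨h1, h2, h3, h4⟩ := hl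
    intro σ j hj hj0
    have hjl : j ∉ l := fun h => hj (List.mem_cons_of_mem _ h)
    have hle : ∀ σ, phLoads v l σ ≤ phLoads v (i :: l) σ := by
      intro σ
      simp only [phLoads]
      split_ifs
      · exact ih h1 σ i h2 h3
      · exact le_rfl
    have hm := phT_mono (v := v) hle j hj0
    have h5 := h4 j hjl hj0
    have : phLoads v (i :: l) σ ≤ phT v (phLoads v l) i := by
      simp only [phLoads]
      split_ifs
      · exact le_rfl
      · exact ih h1 σ i h2 h3
    linarith

lemma ph_step (l : List C) (i : C) (g : Finset C → ℕ) :
    ∑ σ : Finset C, (g σ : ℚ) * phLoads v (i :: l) σ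
      = ∑ σ : Finset C, (g σ : ℚ) * phLoads v l σ
        + ∑ σ : Finset C,
          (if i ∈ σ then (g σ : ℚ) * (phT v (phLoads v l) i - phLoads v l σ) else 0) := by
  rw [← Finset.sum_add_distrib]
  refine Finset.sum_congr rfl fun σ _ => ?_
  simp only [phLoads]
  split_ifs <;> ring

lemma ph_total (l : List C) (hl : phValid v l) :
    ∑ σ : Finset C, (v σ : ℚ) * phLoads v l σ = l.length := by
  induction l with
  | nil => simp [phLoads]
  | cons i l ih =>
    obtain ⟨h1, h2, h3, h4⟩ := hl
    rw [ph_step, ih h1, ph_unit _ _ h3]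
    simp

lemma ph_group (l : List C) (hl : phValid v l) (g : Finset C → ℕ) (hg : ∀ σ, g σ ≤ v σ)
    (U : Finset C) (hU : ∀ σ, 0 < g σ → σ ⊆ U) :
    ∑ σ : Finset C, (g σ : ℚ) * phLoads v l σ ≤ ((l.toFinset ∩ U).card : ℚ) := by
  induction l with
  | nil => simp [phLoads]
  | cons i l ih =>
    obtain ⟨h1, h2, h3, h4⟩ := hl
    rw [ph_step]
    have ih := ih h1
    by_cases hi : i ∈ U
    · have hc : ((i :: l).toFinset ∩ U).card = (l.toFinset ∩ U).card + 1 := by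
        rw [List.toFinset_cons, Finset.insert_inter_of_mem hi, Finset.card_insert_of_notMem]
        simp [h2]
      have : ∑ σ : Finset C,
          (if i ∈ σ then (g σ : ℚ) * (phT v (phLoads v l) i - phLoads v l σ) else 0) ≤ 1 := by
        rw [← ph_unit (phLoads v l) i h3]
        refine Finset.sum_le_sum fun σ _ => ?_
        split_ifs
        · have := ph_inv l h1 σ i h2 h3
          refine mul_le_mul_of_nonneg_right ?_ (by linarith)
          exact_mod_cast hg σ
        · exact le_rfl
      rw [hc]; push_cast; linarith
    · have hc : ((i :: l).toFinset ∩ U) = (l.toFinset ∩ U) := by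
        rw [List.toFinset_cons, Finset.insert_inter_of_notMem hi]
      have : ∑ σ : Finset C,
          (if i ∈ σ then (g σ : ℚ) * (phT v (phLoads v l) i - phLoads v l σ) else 0) = 0 := by
        refine Finset.sum_eq_zero fun σ _ => ?_
        split_ifs with h
        · have : g σ = 0 := by
            by_contra hne
            exact hi (hU σ (Nat.pos_of_ne_zero hne) h)
          simp [this]
        · rfl
      rw [hc]; linarith

theorem ph_PJR (M : ℕ) (E : Finset C) (hM : 1 ≤ M)
    (hV : 0 < ∑ σ : Finset C, v σ) (hE : PhragmenOutcome v M E) : ProvidesPJR v M E := by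
  obtain ⟨l, hl, hlen, rfl⟩ := hE
  intro ℓ g h1 hℓM hg hsize ⟨T, hT, hTg⟩
  set U := (Finset.univ.filter fun σ : Finset C => 0 < g σ).biUnion id with hUdef
  have hU : ∀ σ, 0 < g σ → σ ⊆ U := by
    intro σ hσ x hx
    simp only [hUdef, Finset.mem_biUnion, Finset.mem_filter, Finset.mem_univ, true_and, id]
    exact ⟨σ, hσ, hx⟩
  by_contra! hlt
  obtain _ | ⟨i, l⟩ := l
  · simp at hlen; omega
  have hVq : (0 : ℚ) < ∑ σ : Finset C, (v σ : ℚ) := by exact_mod_cast hV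
  have hMq : (1 : ℚ) ≤ M := by exact_mod_cast hM
  have h1q : (1 : ℚ) ≤ ℓ := by exact_mod_cast h1
  have hApos : (0 : ℚ) < ∑ σ : Finset C, (g σ : ℚ) := by
    by_contra! h
    have : (M : ℚ) * ∑ σ : Finset C, (g σ : ℚ) ≤ 0 := by nlinarith
    nlinarith
  have htot := ph_total _ hl
  have hgrp := ph_group _ hl g hg U hU
  rw [hlen] at htot
  have hl' := hl
  obtain ⟨hv, hil, hi0, himin⟩ := hl
  have hgrp' := ph_group l hv g hg U hU
  set t := phT v (phLoads v l) i with ht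
  -- an unelected common candidate
  obtain ⟨σ0, hσ0⟩ : ∃ σ, 0 < g σ := by
    by_contra! h
    have : ∑ σ : Finset C, (g σ : ℚ) = 0 := Finset.sum_eq_zero fun σ _ => by
      have := h σ
      have : g σ = 0 := by omega
      simp [this]
    linarith
  have hTU : T ⊆ U := (hTg σ0 hσ0).trans (hU σ0 hσ0)
  obtain ⟨j, hjT, hjE⟩ : ∃ j ∈ T, j ∉ (i :: l).toFinset := by
    by_contra! h
    have : T ⊆ (i :: l).toFinset ∩ U := fun x hx => Finset.mem_inter.2 ⟨h x hx, hTU hx⟩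
    have := Finset.card_le_card this
    omega
  have hjl : j ∉ l := by
    intro h; apply hjE; simp [h]
  have hj0 : 0 < phVotes v j := by
    unfold phVotes
    refine Finset.sum_pos' (fun _ _ => by positivity) ⟨σ0, ?_, ?_⟩
    · simpa using hTg σ0 hσ0 hjT
    · exact_mod_cast lt_of_lt_of_le hσ0 (hg σ0)
  have htj : t ≤ phT v (phLoads v l) j := himin j hjl hj0
  have hle : ∀ σ, phLoads v l σ ≤ t := fun σ => ph_inv l hv σ i hil hi0
  have hle' : ∀ σ, phLoads v (i :: l) σ ≤ t := by
    intro σ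
    simp only [phLoads]
    split_ifs
    · exact le_rfl
    · exact hle σ
  have hkey : (∑ σ : Finset C, (g σ : ℚ)) * t - ∑ σ : Finset C, (g σ : ℚ) * phLoads v l σ ≤ 1 := by
    rw [Finset.sum_mul, ← Finset.sum_sub_distrib, ← ph_unit (phLoads v l) j hj0]
    refine Finset.sum_le_sum fun σ _ => ?_
    have ha := hle σ
    split_ifs with h
    · have : (g σ : ℚ) ≤ v σ := by exact_mod_cast hg σ
      have hg0 : (0 : ℚ) ≤ g σ := by positivity
      nlinarith
    · have : g σ = 0 := by
        by_contra hne
        exact h (hTg σ (Nat.pos_of_ne_zero hne) hjT)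
      simp [this]
  have hVt : (M : ℚ) ≤ (∑ σ : Finset C, (v σ : ℚ)) * t := by
    rw [← htot, Finset.sum_mul]
    exact Finset.sum_le_sum fun σ _ => mul_le_mul_of_nonneg_left (hle' σ) (by positivity)
  -- the group earns at least `ℓ`
  have htpos : 0 < t := by
    by_contra! h
    nlinarith
  have hAt : (ℓ : ℚ) ≤ (∑ σ : Finset C, (g σ : ℚ)) * t := by
    have e1 := mul_le_mul_of_nonneg_right hsize htpos.le
    have e2 : (ℓ : ℚ) * M ≤ ℓ * ((∑ σ : Finset C, (v σ : ℚ)) * t) :=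
      mul_le_mul_of_nonneg_left hVt (by linarith)
    have : (M : ℚ) * ℓ ≤ M * ((∑ σ : Finset C, (g σ : ℚ)) * t) := by linarith
    exact le_of_mul_le_mul_left this (by linarith)
  by_cases hi : i ∈ U
  · have hc : ((i :: l).toFinset ∩ U).card = (l.toFinset ∩ U).card + 1 := by
      rw [List.toFinset_cons, Finset.insert_inter_of_mem hi, Finset.card_insert_of_notMem]
      simp [hil]
    have : (((l.toFinset ∩ U).card + 2 : ℕ) : ℚ) ≤ ℓ := by
      exact_mod_cast (by omega : (l.toFinset ∩ U).card + 2 ≤ ℓ)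
    push_cast at this
    linarith
  · have hc : ((i :: l).toFinset ∩ U) = (l.toFinset ∩ U) := by
      rw [List.toFinset_cons, Finset.insert_inter_of_notMem hi]
    have hq : (((l.toFinset ∩ U).card + 1 : ℕ) : ℚ) ≤ ℓ := by
      rw [hc] at hlt
      exact_mod_cast hlt
    push_cast at hq
    have hAeq : (∑ σ : Finset C, (g σ : ℚ)) * t = ℓ := by linarith
    have hVeq : (∑ σ : Finset C, (v σ : ℚ)) * t = M := by
      refine le_antisymm ?_ hVt
      have e1 := mul_le_mul_of_nonneg_right hsize htpos.le
      have : (ℓ : ℚ) * ((∑ σ : Finset C, (v σ : ℚ)) * t) ≤ ℓ * M := by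
        rw [← hAeq] at *
        linarith
      exact le_of_mul_le_mul_left this (by linarith)
    have hzero : ∑ σ : Finset C, (v σ : ℚ) * (t - phLoads v (i :: l) σ) = 0 := by
      simp only [mul_sub, Finset.sum_sub_distrib, ← Finset.sum_mul]
      linarith
    have hz2 : ∑ σ : Finset C, (g σ : ℚ) * (t - phLoads v (i :: l) σ) ≤ 0 := by
      rw [← hzero]
      refine Finset.sum_le_sum fun σ _ => mul_le_mul_of_nonneg_right ?_ ?_
      · exact_mod_cast hg σ
      · linarith [hle' σ]
    simp only [mul_sub, Finset.sum_sub_distrib, ← Finset.sum_mul] at hz2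
    rw [hc] at hgrp
    linarith

end PJR

/-! ### The counterexample to EJR -/

/-- The four ballot types: `{a,b,c}`, `{c,d}`, `{a,b,d}` and nine further candidates. -/
def exS : Fin 4 → Finset (Fin 13) :=
  ![{0, 1, 2}, {2, 3}, {0, 1, 3}, {4, 5, 6, 7, 8, 9, 10, 11, 12}]

/-- Profile with `w k` ballots of type `exS k`. -/
def exV (w : Fin 4 → ℕ) (σ : Finset (Fin 13)) : ℕ := ∑ k, if σ = exS k then w k else 0

def exW : Fin 4 → ℕ := ![1, 1, 1, 8]

lemma exV_sum (w : Fin 4 → ℕ) (f : Finset (Fin 13) → ℚ) :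
    ∑ σ, (exV w σ : ℚ) * f σ = ∑ k, (w k : ℚ) * f (exS k) := by
  simp only [exV, Nat.cast_sum, Finset.sum_mul]
  rw [Finset.sum_comm]
  refine Finset.sum_congr rfl fun k _ => ?_
  rw [Finset.sum_eq_single (exS k)]
  · simp
  · intro b _ hb
    simp [hb]
  · simp

/-- Number of votes for `i`, computed on the support. -/
def exN (i : Fin 13) : ℚ := ∑ k, (exW k : ℚ) * (if i ∈ exS k then 1 else 0)

/-- `t_i` computed on the support. -/
def exT (r : Fin 4 → ℚ) (i : Fin 13) : ℚ :=
  (1 + ∑ k, (exW k : ℚ) * (if i ∈ exS k then r k else 0)) / exN i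

lemma ex_votes (i : Fin 13) : phVotes (exV exW) i = exN i := by
  unfold phVotes exN
  rw [← exV_sum exW (fun σ => if i ∈ σ then 1 else 0), Finset.sum_filter]
  refine Finset.sum_congr rfl fun σ _ => ?_
  split_ifs <;> simp

lemma ex_T (r : Finset (Fin 13) → ℚ) (i : Fin 13) :
    phT (exV exW) r i = exT (fun k => r (exS k)) i := by
  unfold phT exT
  rw [ex_votes, ← exV_sum exW (fun σ => if i ∈ σ then r σ else 0), Finset.sum_filter]
  congr 2
  refine Finset.sum_congr rfl fun σ _ => ?_
  split_ifs <;> simp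

/-- State after electing `l`: the sequence is valid and the loads are `r`. -/
def exH (l : List (Fin 13)) (r : Fin 4 → ℚ) : Prop :=
  phValid (exV exW) l ∧ ∀ k, phLoads (exV exW) l (exS k) = r k

lemma ex_step {l : List (Fin 13)} {r : Fin 4 → ℚ} (h : exH l r) (i : Fin 13) (r' : Fin 4 → ℚ)
    (hd : i ∉ l ∧ 0 < exN i ∧ (∀ j, j ∉ l → exT r i ≤ exT r j) ∧
      ∀ k, (if i ∈ exS k then exT r i else r k) = r' k) : exH (i :: l) r' := by
  obtain ⟨hv, hr⟩ := h
  obtain ⟨h1, h2, h3, h4⟩ := hd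
  have hr' : (fun k => phLoads (exV exW) l (exS k)) = r := funext hr
  refine ⟨⟨hv, h1, by rwa [ex_votes], ?_⟩, ?_⟩
  · intro j hj _
    rw [ex_T, ex_T, hr']
    exact h3 j hj
  · intro k
    rw [← h4 k]
    simp only [phLoads, ex_T, hr]

lemma ex_final : exH [12, 11, 10, 3, 9, 8, 2, 7, 6, 5, 4] ![1/2, 3/4, 3/4, 9/8] := by
  have h0 : exH [] ![0, 0, 0, 0] := ⟨trivial, fun k => by fin_cases k <;> rfl⟩
  have h1 := ex_step h0 4 ![0, 0, 0, 1/8] (by decide +kernel)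
  have h2 := ex_step h1 5 ![0, 0, 0, 2/8] (by decide +kernel)
  have h3 := ex_step h2 6 ![0, 0, 0, 3/8] (by decide +kernel)
  have h4 := ex_step h3 7 ![0, 0, 0, 4/8] (by decide +kernel)
  have h5 := ex_step h4 2 ![1/2, 1/2, 0, 4/8] (by decide +kernel)
  have h6 := ex_step h5 8 ![1/2, 1/2, 0, 5/8] (by decide +kernel)
  have h7 := ex_step h6 9 ![1/2, 1/2, 0, 6/8] (by decide +kernel)
  have h8 := ex_step h7 3 ![1/2, 3/4, 3/4, 6/8] (by decide +kernel)
  have h9 := ex_step h8 10 ![1/2, 3/4, 3/4, 7/8] (by decide +kernel)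
  have h10 := ex_step h9 11 ![1/2, 3/4, 3/4, 1] (by decide +kernel)
  exact ex_step h10 12 ![1/2, 3/4, 3/4, 9/8] (by decide +kernel)

lemma exV_total (w : Fin 4 → ℕ) : ∑ σ, (exV w σ : ℚ) = ∑ k, (w k : ℚ) := by
  simpa using exV_sum w (fun _ => 1)

lemma exV_pos {w : Fin 4 → ℕ} {σ : Finset (Fin 13)} (h : 0 < exV w σ) :
    ∃ k, σ = exS k ∧ 0 < w k := by
  by_contra! hn
  have : exV w σ = 0 := by
    unfold exV
    refine Finset.sum_eq_zero fun k _ => ?_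
    split_ifs with hk
    · have := hn k hk
      omega
    · rfl
  omega

lemma ex_notEJR :
    ¬ ProvidesEJR (exV exW) 11 ([12, 11, 10, 3, 9, 8, 2, 7, 6, 5, 4] : List (Fin 13)).toFinset := by
  intro h
  have hg : ∀ σ, exV ![1, 0, 1, 0] σ ≤ exV exW σ := by
    intro σ
    unfold exV
    refine Finset.sum_le_sum fun k _ => ?_
    split_ifs
    · have hk : ∀ k : Fin 4, (![1, 0, 1, 0] : Fin 4 → ℕ) k ≤ exW k := by decide
      exact hk k
    · exact le_rfl
  have hs : ((2 : ℕ) : ℚ) * (∑ σ, (exV exW σ : ℚ))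
      ≤ ((11 : ℕ) : ℚ) * (∑ σ, (exV ![1, 0, 1, 0] σ : ℚ)) := by
    rw [exV_total, exV_total]
    decide +kernel
  have hT : ∃ T : Finset (Fin 13), 2 ≤ T.card ∧
      ∀ σ : Finset (Fin 13), 0 < exV ![1, 0, 1, 0] σ → T ⊆ σ := by
    refine ⟨{0, 1}, by decide, ?_⟩
    intro σ hσ
    obtain ⟨k, rfl, hk⟩ := exV_pos hσ
    clear hσ
    revert k
    decide +kernel
  obtain ⟨σ, hσ, hc⟩ := h 2 (exV ![1, 0, 1, 0]) (by norm_num) (by norm_num) hg hs hT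
  obtain ⟨k, rfl, hk⟩ := exV_pos hσ
  clear hσ hT hs hg h
  revert k
  decide +kernel

/-- Phragmén's unordered method satisfies PJR (every possible outcome on every
profile provides PJR), but does not satisfy EJR (some possible outcome on some
profile fails EJR). -/
theorem stmt_11 :
    (∀ (C : Type) [Fintype C] [DecidableEq C] (v : Finset C → ℕ) (M : ℕ)
        (E : Finset C), v ∅ = 0 → 1 ≤ M → M ≤ Fintype.card C →
        0 < ∑ σ : Finset C, v σ →
        PhragmenOutcome v M E → ProvidesPJR v M E)
    ∧ (∃ (N : ℕ) (v : Finset (Fin N) → ℕ) (M : ℕ) (E : Finset (Fin N)),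
        v ∅ = 0 ∧ 1 ≤ M ∧ M ≤ N ∧ 0 < (∑ σ : Finset (Fin N), v σ) ∧
        PhragmenOutcome v M E ∧ ¬ ProvidesEJR v M E) := by
  refine ⟨fun C _ _ v M E _ hM _ hV hE => ph_PJR M E hM hV hE, ?_⟩
  refine ⟨13, exV exW, 11, _, by decide +kernel, by norm_num, by norm_num, ?_,
    ⟨_, ex_final.1, rfl, rfl⟩, ex_notEJR⟩
  have h : (0 : ℚ) < ∑ σ, (exV exW σ : ℚ) := by
    rw [exV_total]
    decide +kernel
  exact_mod_cast h
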